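/- For every finite set 𝒮, every probability distribution P_S on 𝒮, and every real ℓ ≥ 0, there exist finite sets 𝒰_n, 𝒳_n, 𝒴_n and a sequence {(φ_n*, ψ_n*)}_{n≥1} of encoder/decoder pairs that asymptotically realizes a (2,2)-threshold scheme with correlation level ℓ and moreover satisfies: limsup_{n→∞} (1/n) log₂|𝒳_n| ≤ H(S)+ℓ, limsup_{n→∞} (1/n) log₂|𝒴_n| ≤ H(S)+ℓ, limsup_{n→∞} (1/n) log₂|𝒰_n| ≤ H(S)+ℓ, liminf_{n→∞} min{ −(1/n) log₂ P_n^X , −(1/n) log₂ P_n^Y } ≥ ℓ, and I(S^n;X_n) = I(S^n;Y_n) = 0 for all n ≥ 1. -/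

import Mathlib

open Finset Filter Real
open scoped BigOperators

noncomputable section

/-- `p` is a probability mass function on a finite type. -/
def IsPMF {α : Type*} [Fintype α] (p : α → ℝ) : Prop :=
  (∀ a, 0 ≤ p a) ∧ ∑ a, p a = 1

open scoped Classical in
/-- The distribution (pushforward pmf) of a random variable `X`
defined on a finite sample space carrying the pmf `p`. -/
def distOf {Ω α : Type*} [Fintype Ω] (p : Ω → ℝ) (X : Ω → α) (x : α) : ℝ :=
  ∑ ω ∈ Finset.univ.filter fun ω => X ω = x, p ω

/-- Base-2 Shannon entropy of a pmf on a finite type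
(the convention `0 · log₂ 0 = 0` holds since `Real.logb 2 0 = 0`). -/
def ent {α : Type*} [Fintype α] (q : α → ℝ) : ℝ :=
  -∑ x, q x * Real.logb 2 (q x)

/-- Base-2 entropy `H(X)` of a random variable `X` under pmf `p`. -/
def entRV {Ω α : Type*} [Fintype Ω] [Fintype α] (p : Ω → ℝ) (X : Ω → α) : ℝ :=
  ent (distOf p X)

/-- Base-2 conditional entropy `H(X|Y) = H(X,Y) − H(Y)`. -/
def condEnt {Ω α β : Type*} [Fintype Ω] [Fintype α] [Fintype β]
    (p : Ω → ℝ) (X : Ω → α) (Y : Ω → β) : ℝ :=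
  entRV p (fun ω => (X ω, Y ω)) - entRV p Y

/-- Base-2 mutual information `I(X;Y) = H(X) + H(Y) − H(X,Y)`. -/
def MI {Ω α β : Type*} [Fintype Ω] [Fintype α] [Fintype β]
    (p : Ω → ℝ) (X : Ω → α) (Y : Ω → β) : ℝ :=
  entRV p X + entRV p Y - entRV p (fun ω => (X ω, Y ω))

/-- `X` and `Y` are independent random variables under the pmf `p`. -/
def IndepRV {Ω α β : Type*} [Fintype Ω] (p : Ω → ℝ) (X : Ω → α) (Y : Ω → β) : Prop :=
  ∀ a b, distOf p (fun ω => (X ω, Y ω)) (a, b) = distOf p X a * distOf p Y b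

/-- An encoder/decoder sequence for the asymptotic (2,2)-threshold setup:
for each `n`, a finite nonempty randomness alphabet `U n`, finite share
alphabets `X n` and `Y n`, a deterministic encoder `enc n` mapping the `n`
secrets and the uniform random number to the two shares, and a decoder
`dec n` (`none` plays the role of the detection symbol `⊥`). -/
structure Scheme22 (𝒮 : Type) where
  U : ℕ → Type
  X : ℕ → Type
  Y : ℕ → Type
  fU : ∀ n, Fintype (U n)
  fX : ∀ n, Fintype (X n)
  fY : ∀ n, Fintype (Y n)
  neU : ∀ n, Nonempty (U n)
  enc : ∀ n, (Fin n → 𝒮) → U n → X n × Y n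
  dec : ∀ n, X n × Y n → Option (Fin n → 𝒮)

attribute [instance] Scheme22.fU Scheme22.fX Scheme22.fY Scheme22.neU

variable {𝒮 : Type} [Fintype 𝒮]

/-- The joint pmf of `(Sⁿ, Uₙ)` on `(Fin n → 𝒮) × C.U n`:
`Sⁿ` is i.i.d. with marginal `PS`, and `Uₙ` is uniform and independent of `Sⁿ`. -/
def jp (C : Scheme22 𝒮) (PS : 𝒮 → ℝ) (n : ℕ) : (Fin n → 𝒮) × C.U n → ℝ :=
  fun ω => (∏ i, PS (ω.1 i)) / (Fintype.card (C.U n) : ℝ)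

/-- The secret `Sⁿ` as a random variable. -/
def Sn (C : Scheme22 𝒮) (n : ℕ) : (Fin n → 𝒮) × C.U n → (Fin n → 𝒮) := Prod.fst

/-- The share `Xₙ` as a random variable. -/
def Xn (C : Scheme22 𝒮) (n : ℕ) : (Fin n → 𝒮) × C.U n → C.X n :=
  fun ω => (C.enc n ω.1 ω.2).1

/-- The share `Yₙ` as a random variable. -/
def Yn (C : Scheme22 𝒮) (n : ℕ) : (Fin n → 𝒮) × C.U n → C.Y n :=
  fun ω => (C.enc n ω.1 ω.2).2

open scoped Classical in
/-- The acceptance region `𝒜ₙ` of the decoder. -/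
def AccRegion (C : Scheme22 𝒮) (n : ℕ) : Finset (C.X n × C.Y n) :=
  Finset.univ.filter fun xy => C.dec n xy ≠ none

open scoped Classical in
/-- The decoding error probability `Pₙᵉ = Pr{ψₙ(φₙ(Sⁿ,Uₙ)) ≠ Sⁿ}`. -/
def Pe (C : Scheme22 𝒮) (PS : 𝒮 → ℝ) (n : ℕ) : ℝ :=
  ∑ ω ∈ Finset.univ.filter
      (fun ω : (Fin n → 𝒮) × C.U n => C.dec n (C.enc n ω.1 ω.2) ≠ some ω.1),
    jp C PS n ω

/-- `Pₙˣ`: the maximal success probability of impersonating participant 1,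
the supremum over all forging distributions `Q` on `𝒳ₙ`. -/
def PimpX (C : Scheme22 𝒮) (PS : 𝒮 → ℝ) (n : ℕ) : ℝ :=
  ⨆ Q : {Q : C.X n → ℝ // IsPMF Q},
    ∑ xy ∈ AccRegion C n, Q.1 xy.1 * distOf (jp C PS n) (Yn C n) xy.2

/-- `Pₙʸ`: the maximal success probability of impersonating participant 2. -/
def PimpY (C : Scheme22 𝒮) (PS : 𝒮 → ℝ) (n : ℕ) : ℝ :=
  ⨆ Q : {Q : C.Y n → ℝ // IsPMF Q},
    ∑ xy ∈ AccRegion C n, distOf (jp C PS n) (Xn C n) xy.1 * Q.1 xy.2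

/-- The sequence `{(φₙ,ψₙ)}` asymptotically realizes a (2,2)-threshold scheme
with correlation level `ℓ`: vanishing decoding error probability, vanishing
normalized leakage `I(Sⁿ;Xₙ)/n` and `I(Sⁿ;Yₙ)/n`, and `I(Xₙ;Yₙ)/n → ℓ`. -/
def Realizes (C : Scheme22 𝒮) (PS : 𝒮 → ℝ) (ℓ : ℝ) : Prop :=
  Tendsto (fun n => Pe C PS n) atTop (nhds 0) ∧
  Tendsto (fun n => MI (jp C PS n) (Sn C n) (Xn C n) / (n : ℝ)) atTop (nhds 0) ∧
  Tendsto (fun n => MI (jp C PS n) (Sn C n) (Yn C n) / (n : ℝ)) atTop (nhds 0) ∧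
  Tendsto (fun n => MI (jp C PS n) (Xn C n) (Yn C n) / (n : ℝ)) atTop (nhds ℓ)

section helpers

lemma sum_distOf {Ω α : Type*} [Fintype Ω] [Fintype α] (p : Ω → ℝ) (X : Ω → α) :
    ∑ x, distOf p X x = ∑ ω, p ω := by
  classical
  unfold distOf
  rw [← Finset.sum_fiberwise (s := Finset.univ) (g := X) (f := p)]

lemma distOf_nonneg {Ω α : Type*} [Fintype Ω] (p : Ω → ℝ) (hp : ∀ a, 0 ≤ p a) (X : Ω → α)
    (x : α) : 0 ≤ distOf p X x := by
  unfold distOf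
  exact Finset.sum_nonneg fun i _ => hp i

lemma isPMF_distOf {Ω α : Type*} [Fintype Ω] [Fintype α] {p : Ω → ℝ} (hp : IsPMF p) (X : Ω → α) :
    IsPMF (distOf p X) :=
  ⟨distOf_nonneg p hp.1 X, by rw [sum_distOf, hp.2]⟩

lemma pmf_le_one {α : Type*} [Fintype α] {p : α → ℝ} (hp : IsPMF p) (a : α) : p a ≤ 1 := by
  rw [← hp.2]
  exact Finset.single_le_sum (fun i _ => hp.1 i) (Finset.mem_univ a)

lemma ent_term_nonneg {α : Type*} [Fintype α] {p : α → ℝ} (hp : IsPMF p) (a : α) :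
    0 ≤ -(p a * Real.logb 2 (p a)) := by
  have h : Real.logb 2 (p a) ≤ 0 :=
    Real.logb_nonpos (by norm_num) (hp.1 a) (pmf_le_one hp a)
  have := hp.1 a
  nlinarith

lemma ent_nonneg {α : Type*} [Fintype α] {p : α → ℝ} (hp : IsPMF p) : 0 ≤ ent p := by
  unfold ent
  rw [← Finset.sum_neg_distrib]
  exact Finset.sum_nonneg fun a _ => ent_term_nonneg hp a

lemma ent_le_card {α : Type*} [Fintype α] [Nonempty α] {p : α → ℝ} (hp : IsPMF p) :
    ent p ≤ Real.logb 2 (Fintype.card α) := by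
  have hK : (0 : ℝ) < Fintype.card α := by exact_mod_cast Fintype.card_pos
  have hl2 : 0 < Real.log 2 := Real.log_pos (by norm_num)
  have key : ∀ a, -(p a * Real.log (p a)) - p a * Real.log (Fintype.card α)
      ≤ 1 / (Fintype.card α : ℝ) - p a := by
    intro a
    rcases (hp.1 a).eq_or_lt with h | h
    · rw [← h]; simp
    · have h1 := Real.log_le_sub_one_of_pos (x := 1 / (p a * Fintype.card α)) (by positivity)
      rw [Real.log_div (by norm_num) (by positivity), Real.log_one,
        Real.log_mul h.ne' hK.ne'] at h1
      have h2 := mul_le_mul_of_nonneg_left h1 h.le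
      have h3 : p a * (1 / (p a * Fintype.card α) - 1) = 1 / (Fintype.card α : ℝ) - p a := by
        field_simp
      rw [h3] at h2
      linarith
  have hs := Finset.sum_le_sum fun a (_ : a ∈ Finset.univ) => key a
  rw [Finset.sum_sub_distrib, Finset.sum_sub_distrib, ← Finset.sum_mul, hp.2,
    Finset.sum_const, Finset.card_univ, nsmul_eq_mul, Finset.sum_neg_distrib] at hs
  have h4 : (Fintype.card α : ℝ) * (1 / Fintype.card α) = 1 := by field_simp
  rw [h4] at hs
  have h5 : ent p = (-∑ a, p a * Real.log (p a)) / Real.log 2 := by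
    unfold ent Real.logb
    rw [neg_div, Finset.sum_div]
    congr 1
    exact Finset.sum_congr rfl fun a _ => by ring
  rw [h5, Real.logb]
  gcongr
  linarith

lemma ent_prod_unif {α B : Type*} [Fintype α] [Fintype B] [Nonempty B] {q : α → ℝ}
    (hq : IsPMF q) :
    ent (fun x : α × B => q x.1 / (Fintype.card B : ℝ)) = ent q + Real.logb 2 (Fintype.card B) := by
  have hK : (0 : ℝ) < Fintype.card B := by exact_mod_cast Fintype.card_pos
  have h : ∀ a, (Fintype.card B : ℝ) * (q a / (Fintype.card B : ℝ) *
      Real.logb 2 (q a / (Fintype.card B : ℝ))) =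
      q a * Real.logb 2 (q a) - q a * Real.logb 2 (Fintype.card B) := by
    intro a
    rcases (hq.1 a).eq_or_lt with h | h
    · rw [← h]; simp
    · rw [Real.logb_div h.ne' hK.ne']
      field_simp
  unfold ent
  rw [Fintype.sum_prod_type]
  simp only [Finset.sum_const, Finset.card_univ, nsmul_eq_mul, h]
  rw [Finset.sum_sub_distrib, ← Finset.sum_mul, hq.2]
  ring

lemma ent_unif {B : Type*} [Fintype B] [Nonempty B] :
    ent (fun _ : B => 1 / (Fintype.card B : ℝ)) = Real.logb 2 (Fintype.card B) := by
  have hK : (0 : ℝ) < Fintype.card B := by exact_mod_cast Fintype.card_pos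
  unfold ent
  rw [Finset.sum_const, Finset.card_univ, nsmul_eq_mul, one_div, Real.logb_inv]
  field_simp

lemma entRV_comp_inj {Ω α β : Type*} [Fintype Ω] [Fintype α] [Fintype β] (p : Ω → ℝ)
    (X : Ω → α) (e : α → β) (he : Function.Injective e) :
    entRV p (fun ω => e (X ω)) = entRV p X := by
  classical
  unfold entRV ent
  congr 1
  have h1 : ∀ a, distOf p (fun ω => e (X ω)) (e a) = distOf p X a := by
    intro a
    unfold distOf
    congr 1
    ext ω
    simp [he.eq_iff]
  have h2 : ∀ b, b ∉ Set.range e → distOf p (fun ω => e (X ω)) b = 0 := by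
    intro b hb
    unfold distOf
    apply Finset.sum_eq_zero
    intro ω hω
    simp only [Finset.mem_filter, Finset.mem_univ, true_and] at hω
    exact absurd ⟨X ω, hω⟩ hb
  symm
  refine Fintype.sum_of_injective e he _ _ ?_ ?_
  · intro b hb
    rw [h2 b hb]; simp
  · intro a
    rw [h1]

lemma distOf_eq_sum_ite {Ω α : Type*} [Fintype Ω] [DecidableEq α] (p : Ω → ℝ) (X : Ω → α)
    (x : α) : distOf p X x = ∑ ω, if X ω = x then p ω else 0 := by
  unfold distOf
  rw [Finset.sum_filter]
  refine Finset.sum_congr rfl fun ω _ => ?_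
  congr

/-- joint law of `h(A)` and a bijective image of the uniform variable -/
lemma distOf_pair {A B B' γ : Type*} [Fintype A] [Fintype B] (p : A → ℝ)
    (h : A → γ) (e : A → B ≃ B') (N : ℝ) (c : γ) (b : B') :
    distOf (fun ω : A × B => p ω.1 / N)
      (fun ω => (h ω.1, e ω.1 ω.2)) (c, b) = distOf p h c / N := by
  classical
  rw [distOf_eq_sum_ite, distOf_eq_sum_ite, Fintype.sum_prod_type, Finset.sum_div]
  refine Finset.sum_congr rfl fun a _ => ?_
  rw [Finset.sum_eq_single ((e a).symm b)]
  · by_cases hh : h a = c <;> simp [hh]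
  · intro b' _ hb'
    rw [if_neg]
    intro hc
    apply hb'
    rw [Prod.mk.injEq] at hc
    rw [← hc.2]; simp
  · simp

lemma distOf_snd {A B B' : Type*} [Fintype A] [Fintype B] {p : A → ℝ} (hp : IsPMF p)
    (e : A → B ≃ B') (N : ℝ) (b : B') :
    distOf (fun ω : A × B => p ω.1 / N) (fun ω => e ω.1 ω.2) b = 1 / N := by
  classical
  rw [← hp.2, distOf_eq_sum_ite, Fintype.sum_prod_type, Finset.sum_div]
  refine Finset.sum_congr rfl fun a _ => ?_
  rw [Finset.sum_eq_single ((e a).symm b)]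
  · simp
  · intro b' _ hb'
    rw [if_neg]
    intro hc
    apply hb'
    rw [← hc]; simp
  · simp

lemma distOf_fst {A B γ : Type*} [Fintype A] [Fintype B] [Nonempty B] (p : A → ℝ) (h : A → γ)
    (c : γ) :
    distOf (fun ω : A × B => p ω.1 / (Fintype.card B : ℝ)) (fun ω => h ω.1) c = distOf p h c := by
  classical
  have hK : (0 : ℝ) < Fintype.card B := by exact_mod_cast Fintype.card_pos
  rw [distOf_eq_sum_ite, distOf_eq_sum_ite, Fintype.sum_prod_type]
  refine Finset.sum_congr rfl fun a _ => ?_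
  simp only [Finset.sum_const, Finset.card_univ, nsmul_eq_mul]
  split_ifs
  · field_simp
  · simp

lemma MI_secret {A B B' γ : Type*} [Fintype A] [Fintype B] [Fintype B'] [Nonempty B] [Fintype γ]
    {p : A → ℝ} (hp : IsPMF p) (h : A → γ) (e : A → B ≃ B') :
    MI (fun ω : A × B => p ω.1 / (Fintype.card B : ℝ)) (fun ω => h ω.1)
      (fun ω => e ω.1 ω.2) = 0 := by
  have hA : Nonempty A := by
    by_contra hA
    rw [not_nonempty_iff] at hA
    have := hp.2
    simp at this
  obtain ⟨a⟩ := hA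
  have hB : Nonempty B' := ⟨e a (Classical.arbitrary B)⟩
  have hc : Fintype.card B = Fintype.card B' := Fintype.card_congr (e a)
  have h1 : entRV (fun ω : A × B => p ω.1 / (Fintype.card B : ℝ)) (fun ω => h ω.1)
      = ent (distOf p h) := by
    unfold entRV; congr 1; funext c; exact distOf_fst p h c
  have h2 : entRV (fun ω : A × B => p ω.1 / (Fintype.card B : ℝ)) (fun ω => e ω.1 ω.2)
      = Real.logb 2 (Fintype.card B') := by
    rw [← ent_unif]; unfold entRV; congr 1; funext c
    rw [distOf_snd hp e, hc]
  have h3 : entRV (fun ω : A × B => p ω.1 / (Fintype.card B : ℝ))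
      (fun ω => (h ω.1, e ω.1 ω.2)) = ent (distOf p h) + Real.logb 2 (Fintype.card B') := by
    rw [← ent_prod_unif (isPMF_distOf hp h)]; unfold entRV; congr 1; funext c
    rw [← hc]
    exact distOf_pair p h e _ c.1 c.2
  unfold MI
  rw [h1, h2, h3]; ring

lemma isPMF_pi {PS : 𝒮 → ℝ} (hPS : IsPMF PS) (n : ℕ) :
    IsPMF (fun s : Fin n → 𝒮 => ∏ i, PS (s i)) := by
  classical
  refine ⟨fun s => Finset.prod_nonneg fun i _ => hPS.1 _, ?_⟩
  have := (Finset.prod_univ_sum (fun _ : Fin n => (Finset.univ : Finset 𝒮))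
    (fun _ a => PS a)).symm
  rw [Fintype.piFinset_univ] at this
  rw [this]
  simp [hPS.2]

lemma sum_pi_cons (n : ℕ) (F : (Fin (n+1) → 𝒮) → ℝ) :
    ∑ s, F s = ∑ a : 𝒮, ∑ s : Fin n → 𝒮, F (Fin.cons a s) := by
  rw [← Fintype.sum_prod_type' (f := fun a s => F (Fin.cons a s))]
  symm
  exact Fintype.sum_equiv (Fin.consEquiv fun _ => 𝒮) _ _ (fun x => rfl)

lemma mean_zero {PS : 𝒮 → ℝ} (hPS : IsPMF PS) (g : 𝒮 → ℝ) (hg : ∑ a, PS a * g a = 0) (n : ℕ) :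
    ∑ s : Fin n → 𝒮, (∏ i, PS (s i)) * ∑ i, g (s i) = 0 := by
  induction n with
  | zero => simp
  | succ n ih =>
    rw [sum_pi_cons]
    simp only [Fin.prod_univ_succ, Fin.sum_univ_succ, Fin.cons_zero, Fin.cons_succ]
    have : ∀ a : 𝒮, ∑ s : Fin n → 𝒮, (PS a * ∏ i, PS (s i)) * (g a + ∑ i, g (s i))
        = PS a * g a := by
      intro a
      have h1 : ∀ s : Fin n → 𝒮, (PS a * ∏ i, PS (s i)) * (g a + ∑ i, g (s i)) =
        PS a * g a * (∏ i, PS (s i)) + PS a * ((∏ i, PS (s i)) * ∑ i, g (s i)) := by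
        intro s; ring
      simp only [h1]
      rw [Finset.sum_add_distrib, ← Finset.mul_sum, ← Finset.mul_sum, ih, (isPMF_pi hPS n).2]
      ring
    simp only [this, hg]

lemma second_moment {PS : 𝒮 → ℝ} (hPS : IsPMF PS) (g : 𝒮 → ℝ) (hg : ∑ a, PS a * g a = 0)
    (n : ℕ) :
    ∑ s : Fin n → 𝒮, (∏ i, PS (s i)) * (∑ i, g (s i)) ^ 2 = n * ∑ a, PS a * g a ^ 2 := by
  induction n with
  | zero => simp
  | succ n ih =>
    rw [sum_pi_cons]
    simp only [Fin.prod_univ_succ, Fin.sum_univ_succ, Fin.cons_zero, Fin.cons_succ]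
    have : ∀ a : 𝒮, ∑ s : Fin n → 𝒮, (PS a * ∏ i, PS (s i)) * (g a + ∑ i, g (s i)) ^ 2
        = PS a * g a ^ 2 + PS a * (n * ∑ a, PS a * g a ^ 2) := by
      intro a
      have h1 : ∀ s : Fin n → 𝒮, (PS a * ∏ i, PS (s i)) * (g a + ∑ i, g (s i)) ^ 2 =
        PS a * g a ^ 2 * (∏ i, PS (s i)) + 2 * PS a * g a * ((∏ i, PS (s i)) * ∑ i, g (s i))
        + PS a * ((∏ i, PS (s i)) * (∑ i, g (s i)) ^ 2) := by
        intro s; ring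
      simp only [h1]
      rw [Finset.sum_add_distrib, Finset.sum_add_distrib, ← Finset.mul_sum, ← Finset.mul_sum,
        ← Finset.mul_sum, ih, mean_zero hPS g hg, (isPMF_pi hPS n).2]
      ring
    simp only [this]
    rw [Finset.sum_add_distrib, ← Finset.sum_mul, hPS.2]
    push_cast
    ring

open scoped Classical in
/-- one-shot source coding statement -/
lemma source_oneshot {PS : 𝒮 → ℝ} (hPS : IsPMF PS) :
    ∃ V : ℝ, ∀ (n : ℕ) (ε : ℝ), 1 ≤ n → 0 < ε →
    ∃ (k : ℕ) (f : (Fin n → 𝒮) → ZMod (k+1)) (g : ZMod (k+1) → (Fin n → 𝒮)) (t : ℝ),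
      0 ≤ t ∧ t ≤ V / (n * ε ^ 2) ∧
      (∑ s ∈ Finset.univ.filter (fun s => g (f s) ≠ s), ∏ i, PS (s i)) ≤ t ∧
      Real.logb 2 ((k + 1 : ℕ) : ℝ) ≤ 1 + n * (ent PS + ε) ∧
      (1 - t) * (n * (ent PS - ε)) ≤ ent (distOf (fun s : Fin n → 𝒮 => ∏ i, PS (s i)) f) := by
  have hne : Nonempty 𝒮 := by
    by_contra hA
    rw [not_nonempty_iff] at hA
    have := hPS.2
    simp at this
  set G : 𝒮 → ℝ := fun a => -Real.logb 2 (PS a) - ent PS with hG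
  have hG0 : ∑ a, PS a * G a = 0 := by
    have : ∀ a, PS a * G a = -(PS a * Real.logb 2 (PS a)) - PS a * ent PS := by
      intro a; simp only [hG]; ring
    simp only [this]
    rw [Finset.sum_sub_distrib, ← Finset.sum_mul, hPS.2, Finset.sum_neg_distrib]
    unfold ent; ring
  refine ⟨∑ a, PS a * G a ^ 2, ?_⟩
  intro n ε hn hε
  have hn0 : (0 : ℝ) < n := by exact_mod_cast hn
  set p : (Fin n → 𝒮) → ℝ := fun s => ∏ i, PS (s i) with hpdef
  have hp : IsPMF p := isPMF_pi hPS n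
  set T : Finset (Fin n → 𝒮) :=
    Finset.univ.filter (fun s => 0 < p s ∧ |∑ i, G (s i)| ≤ n * ε) with hT
  have hmemT : ∀ s, s ∈ T ↔ 0 < p s ∧ |∑ i, G (s i)| ≤ n * ε := by
    intro s; simp [hT]
  have hlog : ∀ s ∈ T, -Real.logb 2 (p s) = n * ent PS + ∑ i, G (s i) := by
    intro s hs
    have hs0 := ((hmemT s).1 hs).1
    have hpos : ∀ i ∈ Finset.univ, PS (s i) ≠ 0 := by
      intro i hi h0
      have : p s = 0 := Finset.prod_eq_zero hi h0
      linarith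
    have : Real.logb 2 (p s) = ∑ i, Real.logb 2 (PS (s i)) := by
      simp only [hpdef]
      rw [Real.logb_prod _ _ hpos]
    rw [this]
    simp only [hG, Finset.sum_sub_distrib, Finset.sum_neg_distrib, Finset.sum_const,
      Finset.card_univ, Fintype.card_fin, nsmul_eq_mul]
    ring
  have hH : 0 ≤ ent PS := ent_nonneg hPS
  -- size of T
  have hcard : (T.card : ℝ) ≤ (2 : ℝ) ^ (n * (ent PS + ε)) := by
    have h1 : ∀ s ∈ T, (2 : ℝ) ^ (-(n * (ent PS + ε))) ≤ p s := by
      intro s hs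
      have hs0 := ((hmemT s).1 hs)
      have h2 := hlog s hs
      rw [← Real.le_logb_iff_rpow_le (by norm_num) hs0.1]
      have := (abs_le.1 hs0.2).2
      nlinarith
    have h3 : (T.card : ℝ) * (2 : ℝ) ^ (-(n * (ent PS + ε))) ≤ 1 := by
      calc (T.card : ℝ) * (2 : ℝ) ^ (-(n * (ent PS + ε)))
          = ∑ s ∈ T, (2 : ℝ) ^ (-(n * (ent PS + ε))) := by simp
        _ ≤ ∑ s ∈ T, p s := Finset.sum_le_sum h1
        _ ≤ ∑ s, p s := Finset.sum_le_univ_sum_of_nonneg hp.1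
        _ = 1 := hp.2
    rw [Real.rpow_neg (by norm_num)] at h3
    have h4 : (0 : ℝ) < (2 : ℝ) ^ (n * (ent PS + ε)) := by positivity
    rwa [← div_eq_mul_inv, div_le_one h4] at h3
  have hcE : Fintype.card (Option T) = Fintype.card (ZMod (T.card + 1)) := by
    rw [Fintype.card_option, ZMod.card, Fintype.card_coe]
  let E : Option T ≃ ZMod (T.card + 1) := Fintype.equivOfCardEq hcE
  let f0 : (Fin n → 𝒮) → Option T := fun s => if h : s ∈ T then some ⟨s, h⟩ else none
  let g0 : Option T → (Fin n → 𝒮) := fun o => o.elim (Classical.arbitrary _) (fun t => t.1)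
  refine ⟨T.card, fun s => E (f0 s), fun m => g0 (E.symm m), ∑ s ∈ Tᶜ, p s, ?_, ?_, ?_, ?_, ?_⟩
  · exact Finset.sum_nonneg fun s _ => hp.1 s
  · rw [le_div_iff₀ (by positivity)]
    have h1 : ∀ s ∈ Tᶜ, p s * (n * ε) ^ 2 ≤ p s * (∑ i, G (s i)) ^ 2 := by
      intro s hs
      rw [Finset.mem_compl, hmemT] at hs
      rcases (hp.1 s).eq_or_lt with h0 | h0
      · rw [← h0]; simp
      · have : n * ε < |∑ i, G (s i)| := by
          by_contra hc
          exact hs ⟨h0, not_lt.1 hc⟩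
        rw [← sq_abs (∑ i, G (s i))]
        gcongr
    have h2 : (∑ s ∈ Tᶜ, p s) * (n * ε) ^ 2 ≤ n * ∑ a, PS a * G a ^ 2 := by
      rw [← second_moment hPS G hG0 n, Finset.sum_mul]
      refine (Finset.sum_le_sum h1).trans ?_
      exact Finset.sum_le_univ_sum_of_nonneg fun s => mul_nonneg (hp.1 s) (sq_nonneg _)
    have h3 : n * ((∑ s ∈ Tᶜ, p s) * (n * ε ^ 2)) ≤ n * ∑ a, PS a * G a ^ 2 := by
      refine le_trans (le_of_eq ?_) h2
      ring
    exact le_of_mul_le_mul_left h3 hn0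
  · refine Finset.sum_le_sum_of_subset_of_nonneg ?_ fun s _ _ => hp.1 s
    intro s hs
    simp only [Finset.mem_filter, Finset.mem_univ, true_and] at hs
    rw [Finset.mem_compl]
    intro hsT
    apply hs
    simp [f0, g0, hsT]
  · have h1 : ((T.card + 1 : ℕ) : ℝ) ≤ (2 : ℝ) ^ (1 + n * (ent PS + ε)) := by
      rw [Real.rpow_add (by norm_num), Real.rpow_one]
      have : (1 : ℝ) ≤ (2 : ℝ) ^ (n * (ent PS + ε)) :=
        Real.one_le_rpow (by norm_num) (by positivity)
      push_cast
      linarith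
    rw [Real.logb_le_iff_le_rpow (by norm_num) (by positivity)]
    exact h1
  · have hd : ∀ s ∈ T, distOf p (fun s => E (f0 s)) (E (f0 s)) = p s := by
      intro s hs
      rw [distOf_eq_sum_ite, Finset.sum_eq_single s]
      · simp
      · intro s' _ hne'
        rw [if_neg]
        intro hc
        apply hne'
        have hc' := E.injective hc
        simp only [f0, hs, dif_pos] at hc'
        split_ifs at hc' with h'
        simpa using hc'
      · simp
    have hinj : Set.InjOn (fun s => E (f0 s)) (T : Set (Fin n → 𝒮)) := by
      intro s hs s' hs' hc
      have hc' := E.injective hc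
      have hs1 : s ∈ T := hs
      have hs2 : s' ∈ T := hs'
      simpa [f0, hs1, hs2] using hc'
    have hsumT : ∑ s ∈ T, p s = 1 - ∑ s ∈ Tᶜ, p s := by
      rw [← hp.2, ← Finset.sum_add_sum_compl T]; ring
    have hq := isPMF_distOf hp (fun s => E (f0 s))
    rw [← hsumT, Finset.sum_mul]
    calc ∑ s ∈ T, p s * (n * (ent PS - ε))
        ≤ ∑ s ∈ T, -(distOf p (fun s => E (f0 s)) (E (f0 s)) *
            Real.logb 2 (distOf p (fun s => E (f0 s)) (E (f0 s)))) := by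
          refine Finset.sum_le_sum fun s hs => ?_
          rw [hd s hs]
          have h1 := hlog s hs
          have h2 := (abs_le.1 ((hmemT s).1 hs).2).1
          rw [← mul_neg, h1]
          apply mul_le_mul_of_nonneg_left _ (hp.1 s)
          linarith
      _ = ∑ m ∈ T.image (fun s => E (f0 s)), -(distOf p (fun s => E (f0 s)) m *
            Real.logb 2 (distOf p (fun s => E (f0 s)) m)) := by
          rw [Finset.sum_image hinj]
      _ ≤ ∑ m, -(distOf p (fun s => E (f0 s)) m *
            Real.logb 2 (distOf p (fun s => E (f0 s)) m)) :=
          Finset.sum_le_univ_sum_of_nonneg fun m => ent_term_nonneg hq m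
      _ = _ := by
          unfold ent; rw [Finset.sum_neg_distrib]

open scoped Classical in
lemma source_coding {PS : 𝒮 → ℝ} (hPS : IsPMF PS) :
    ∃ (k : ℕ → ℕ) (f : ∀ n, (Fin n → 𝒮) → ZMod (k n+1))
      (g : ∀ n, ZMod (k n+1) → (Fin n → 𝒮)),
      Tendsto (fun n => ∑ s ∈ Finset.univ.filter (fun s => g n (f n s) ≠ s), ∏ i, PS (s i))
        atTop (nhds 0) ∧
      Tendsto (fun n => Real.logb 2 ((k n + 1 : ℕ) : ℝ) / (n : ℝ)) atTop (nhds (ent PS)) ∧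
      Tendsto (fun n => ent (distOf (fun s : Fin n → 𝒮 => ∏ i, PS (s i)) (f n)) / (n : ℝ))
        atTop (nhds (ent PS)) := by
  obtain ⟨V, hV⟩ := source_oneshot hPS
  have hne : Nonempty 𝒮 := by
    by_contra hA
    rw [not_nonempty_iff] at hA
    have := hPS.2
    simp at this
  let ε : ℕ → ℝ := fun n => (n : ℝ) ^ (-(1/4) : ℝ)
  have hε0 : Tendsto ε atTop (nhds 0) :=
    (tendsto_rpow_neg_atTop (by norm_num)).comp tendsto_natCast_atTop_atTop
  have hVε : Tendsto (fun n : ℕ => V / (n * ε n ^ 2)) atTop (nhds 0) := by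
    have h1 : Tendsto (fun n : ℕ => V * (n : ℝ) ^ (-(1/2) : ℝ)) atTop (nhds (V * 0)) :=
      ((tendsto_rpow_neg_atTop (by norm_num)).comp tendsto_natCast_atTop_atTop).const_mul V
    rw [mul_zero] at h1
    refine h1.congr' ?_
    filter_upwards [eventually_ge_atTop 1] with n hn
    have hn0 : (0 : ℝ) < n := by exact_mod_cast hn
    have : (n : ℝ) * ε n ^ 2 = (n : ℝ) ^ (1/2 : ℝ) := by
      simp only [ε]
      rw [← Real.rpow_natCast ((n : ℝ) ^ (-(1/4) : ℝ)), ← Real.rpow_mul hn0.le]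
      nth_rewrite 1 [← Real.rpow_one (n : ℝ)]
      rw [← Real.rpow_add hn0]
      norm_num
    rw [this, Real.rpow_neg hn0.le, div_eq_mul_inv V]
  have hall : ∀ n : ℕ, ∃ (k : ℕ) (f : (Fin n → 𝒮) → ZMod (k+1)) (g : ZMod (k+1) → (Fin n → 𝒮))
      (t : ℝ), 1 ≤ n → (0 ≤ t ∧ t ≤ V / (n * ε n ^ 2) ∧
      (∑ s ∈ Finset.univ.filter (fun s => g (f s) ≠ s), ∏ i, PS (s i)) ≤ t ∧
      Real.logb 2 ((k + 1 : ℕ) : ℝ) ≤ 1 + n * (ent PS + ε n) ∧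
      (1 - t) * (n * (ent PS - ε n)) ≤
        ent (distOf (fun s : Fin n → 𝒮 => ∏ i, PS (s i)) f)) := by
    intro n
    by_cases hn : 1 ≤ n
    · have hn0 : (0 : ℝ) < n := by exact_mod_cast hn
      obtain ⟨k, f, g, t, h⟩ := hV n (ε n) hn (Real.rpow_pos_of_pos hn0 _)
      exact ⟨k, f, g, t, fun _ => h⟩
    · exact ⟨0, fun _ => 0, fun _ => Classical.arbitrary _, 0, fun h => absurd h hn⟩
  choose k f g t h using hall
  have ht : Tendsto t atTop (nhds 0) := by
    refine tendsto_of_tendsto_of_tendsto_of_le_of_le' tendsto_const_nhds hVε ?_ ?_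
    · filter_upwards [eventually_ge_atTop 1] with n hn using (h n hn).1
    · filter_upwards [eventually_ge_atTop 1] with n hn using (h n hn).2.1
  have hlow : Tendsto (fun n => (1 - t n) * (ent PS - ε n)) atTop (nhds (ent PS)) := by
    have := ((tendsto_const_nhds (x := (1 : ℝ))).sub ht).mul
      ((tendsto_const_nhds (x := ent PS)).sub hε0)
    simpa using this
  have hup : Tendsto (fun n : ℕ => 1 / (n : ℝ) + (ent PS + ε n)) atTop (nhds (ent PS)) := by
    have := (tendsto_one_div_atTop_nhds_zero_nat (𝕜 := ℝ)).add
      ((tendsto_const_nhds (x := ent PS)).add hε0)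
    simpa using this
  have e1 : ∀ n : ℕ, 1 ≤ n → (1 - t n) * (ent PS - ε n) ≤
      ent (distOf (fun s : Fin n → 𝒮 => ∏ i, PS (s i)) (f n)) / (n : ℝ) := by
    intro n hn
    have hn0 : (0 : ℝ) < n := by exact_mod_cast hn
    rw [le_div_iff₀ hn0]
    refine le_trans (le_of_eq ?_) (h n hn).2.2.2.2
    ring
  have e2 : ∀ n : ℕ, ent (distOf (fun s : Fin n → 𝒮 => ∏ i, PS (s i)) (f n)) / (n : ℝ) ≤
      Real.logb 2 ((k n + 1 : ℕ) : ℝ) / (n : ℝ) := by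
    intro n
    have := ent_le_card (isPMF_distOf (isPMF_pi hPS n) (f n))
    rw [ZMod.card] at this
    gcongr
  have e3 : ∀ n : ℕ, 1 ≤ n → Real.logb 2 ((k n + 1 : ℕ) : ℝ) / (n : ℝ) ≤
      1 / (n : ℝ) + (ent PS + ε n) := by
    intro n hn
    have hn0 : (0 : ℝ) < n := by exact_mod_cast hn
    rw [div_le_iff₀ hn0]
    refine le_trans (h n hn).2.2.2.1 (le_of_eq ?_)
    field_simp
  refine ⟨k, f, g, ?_, ?_, ?_⟩
  · refine tendsto_of_tendsto_of_tendsto_of_le_of_le' tendsto_const_nhds ht ?_ ?_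
    · exact Eventually.of_forall fun n =>
        Finset.sum_nonneg fun s _ => (isPMF_pi hPS n).1 s
    · filter_upwards [eventually_ge_atTop 1] with n hn using (h n hn).2.2.1
  · refine tendsto_of_tendsto_of_tendsto_of_le_of_le' hlow hup ?_ ?_
    · filter_upwards [eventually_ge_atTop 1] with n hn using (e1 n hn).trans (e2 n)
    · filter_upwards [eventually_ge_atTop 1] with n hn using e3 n hn
  · refine tendsto_of_tendsto_of_tendsto_of_le_of_le' hlow hup ?_ ?_
    · filter_upwards [eventually_ge_atTop 1] with n hn using e1 n hn
    · filter_upwards [eventually_ge_atTop 1] with n hn using (e2 n).trans (e3 n hn)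

lemma key_rate {ℓ : ℝ} (hℓ : 0 ≤ ℓ) :
    ∃ L : ℕ → ℕ, Tendsto (fun n => Real.logb 2 ((L n + 1 : ℕ) : ℝ) / (n : ℝ)) atTop (nhds ℓ) := by
  refine ⟨fun n => ⌊(2 : ℝ) ^ (n * ℓ)⌋₊, ?_⟩
  have hup : Tendsto (fun n : ℕ => 1 / (n : ℝ) + ℓ) atTop (nhds ℓ) := by
    have := (tendsto_one_div_atTop_nhds_zero_nat (𝕜 := ℝ)).add
      (tendsto_const_nhds (x := ℓ))
    simpa using this
  refine tendsto_of_tendsto_of_tendsto_of_le_of_le' tendsto_const_nhds hup ?_ ?_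
  · filter_upwards [eventually_ge_atTop 1] with n hn
    have hn0 : (0 : ℝ) < n := by exact_mod_cast hn
    rw [le_div_iff₀ hn0, Real.le_logb_iff_rpow_le (by norm_num) (by positivity), mul_comm]
    push_cast
    exact (Nat.lt_floor_add_one _).le
  · filter_upwards [eventually_ge_atTop 1] with n hn
    have hn0 : (0 : ℝ) < n := by exact_mod_cast hn
    rw [div_le_iff₀ hn0, Real.logb_le_iff_le_rpow (by norm_num) (by positivity)]
    have h1 : (1 / (n : ℝ) + ℓ) * n = 1 + n * ℓ := by field_simp
    rw [h1, Real.rpow_add (by norm_num), Real.rpow_one]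
    have h2 : (1 : ℝ) ≤ (2 : ℝ) ^ (n * ℓ) := Real.one_le_rpow (by norm_num) (by positivity)
    have h3 : (⌊(2 : ℝ) ^ (n * ℓ)⌋₊ : ℝ) ≤ (2 : ℝ) ^ (n * ℓ) := Nat.floor_le (by positivity)
    push_cast
    linarith

/-- the scheme -/
def mkScheme (k L : ℕ → ℕ) (f : ∀ n, (Fin n → 𝒮) → ZMod (k n+1))
    (g : ∀ n, ZMod (k n+1) → (Fin n → 𝒮)) : Scheme22 𝒮 where
  U n := ZMod (k n + 1) × Fin (L n + 1)
  X n := ZMod (k n + 1) × Fin (L n + 1)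
  Y n := ZMod (k n + 1) × Fin (L n + 1)
  fU n := inferInstance
  fX n := inferInstance
  fY n := inferInstance
  neU n := inferInstance
  enc n s u := (u, (u.1 + f n s, u.2))
  dec n xy := if xy.1.2 = xy.2.2 then some (g n (xy.2.1 - xy.1.1)) else none

/-- shift bijection -/
def shiftE (K L : ℕ) (c : ZMod (K+1)) :
    ZMod (K+1) × Fin (L+1) ≃ ZMod (K+1) × Fin (L+1) :=
  (Equiv.addRight c).prodCongr (Equiv.refl _)

lemma isPMF_delta {α : Type*} [Fintype α] [DecidableEq α] (a : α) :
    IsPMF (fun b => if b = a then (1 : ℝ) else 0) :=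
  ⟨fun b => by dsimp only; split_ifs <;> norm_num, by simp⟩

lemma acc_sum (K L : ℕ) (w : Fin (L+1)) :
    ∑ y : ZMod (K+1) × Fin (L+1), (if w = y.2 then (1 : ℝ) / (((K+1) * (L+1) : ℕ) : ℝ) else 0)
      = 1 / ((L + 1 : ℕ) : ℝ) := by
  rw [Fintype.sum_prod_type]
  simp only [Finset.sum_ite_eq, Finset.mem_univ, if_true, Finset.sum_const, Finset.card_univ,
    ZMod.card, nsmul_eq_mul]
  push_cast
  field_simp

end helpers

section scheme

variable (k L : ℕ → ℕ) (f : ∀ n, (Fin n → 𝒮) → ZMod (k n+1))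
    (g : ∀ n, ZMod (k n+1) → (Fin n → 𝒮)) (PS : 𝒮 → ℝ)

lemma ms_card (n : ℕ) : Fintype.card (ZMod (k n + 1) × Fin (L n + 1)) = (k n + 1) * (L n + 1) := by
  rw [Fintype.card_prod, ZMod.card, Fintype.card_fin]

lemma ms_MI_SX (hPS : IsPMF PS) (n : ℕ) :
    MI (jp (mkScheme k L f g) PS n) (Sn (mkScheme k L f g) n) (Xn (mkScheme k L f g) n) = 0 :=
  MI_secret (B := ZMod (k n + 1) × Fin (L n + 1)) (isPMF_pi hPS n) (fun s => s)
    (fun _ => Equiv.refl _)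

lemma ms_MI_SY (hPS : IsPMF PS) (n : ℕ) :
    MI (jp (mkScheme k L f g) PS n) (Sn (mkScheme k L f g) n) (Yn (mkScheme k L f g) n) = 0 :=
  MI_secret (B := ZMod (k n + 1) × Fin (L n + 1)) (isPMF_pi hPS n) (fun s => s)
    (fun s => shiftE (k n) (L n) (f n s))

lemma ms_distX (hPS : IsPMF PS) (n : ℕ) (x : ZMod (k n + 1) × Fin (L n + 1)) :
    distOf (jp (mkScheme k L f g) PS n) (Xn (mkScheme k L f g) n) x
      = 1 / (((k n + 1) * (L n + 1) : ℕ) : ℝ) := by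
  rw [← ms_card]
  exact distOf_snd (B := ZMod (k n + 1) × Fin (L n + 1)) (isPMF_pi hPS n)
    (fun _ => Equiv.refl _) _ x

lemma ms_distY (hPS : IsPMF PS) (n : ℕ) (y : ZMod (k n + 1) × Fin (L n + 1)) :
    distOf (jp (mkScheme k L f g) PS n) (Yn (mkScheme k L f g) n) y
      = 1 / (((k n + 1) * (L n + 1) : ℕ) : ℝ) := by
  rw [← ms_card]
  exact distOf_snd (B := ZMod (k n + 1) × Fin (L n + 1)) (isPMF_pi hPS n)
    (fun s => shiftE (k n) (L n) (f n s)) _ y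

lemma ms_MI_XY (hPS : IsPMF PS) (n : ℕ) :
    MI (jp (mkScheme k L f g) PS n) (Xn (mkScheme k L f g) n) (Yn (mkScheme k L f g) n)
      = Real.logb 2 ((k n + 1 : ℕ) : ℝ) + Real.logb 2 ((L n + 1 : ℕ) : ℝ)
        - ent (distOf (fun s : Fin n → 𝒮 => ∏ i, PS (s i)) (f n)) := by
  have hX : entRV (jp (mkScheme k L f g) PS n) (Xn (mkScheme k L f g) n)
      = Real.logb 2 (((k n + 1) * (L n + 1) : ℕ) : ℝ) := by
    rw [← ms_card, ← ent_unif, ms_card]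
    unfold entRV
    congr 1
    funext x
    exact ms_distX k L f g PS hPS n x
  have hY : entRV (jp (mkScheme k L f g) PS n) (Yn (mkScheme k L f g) n)
      = Real.logb 2 (((k n + 1) * (L n + 1) : ℕ) : ℝ) := by
    rw [← ms_card, ← ent_unif, ms_card]
    unfold entRV
    congr 1
    funext x
    exact ms_distY k L f g PS hPS n x
  have hXY : entRV (jp (mkScheme k L f g) PS n)
      (fun ω => (Xn (mkScheme k L f g) n ω, Yn (mkScheme k L f g) n ω))
      = ent (distOf (fun s : Fin n → 𝒮 => ∏ i, PS (s i)) (f n)) +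
        Real.logb 2 (((k n + 1) * (L n + 1) : ℕ) : ℝ) := by
    let e : ZMod (k n + 1) × (ZMod (k n + 1) × Fin (L n + 1)) →
      (ZMod (k n + 1) × Fin (L n + 1)) × (ZMod (k n + 1) × Fin (L n + 1)) :=
      fun z => (z.2, (z.2.1 + z.1, z.2.2))
    have he : Function.Injective e := by
      rintro ⟨a, b, c⟩ ⟨a', b', c'⟩ h
      simp only [e, Prod.mk.injEq] at h
      obtain ⟨⟨rfl, rfl⟩, h2, -⟩ := h
      rw [add_left_cancel h2]
    have h1 := entRV_comp_inj
      (fun ω : (Fin n → 𝒮) × (ZMod (k n + 1) × Fin (L n + 1)) =>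
        (∏ i, PS (ω.1 i)) / (Fintype.card (ZMod (k n + 1) × Fin (L n + 1)) : ℝ))
      (fun ω => (f n ω.1, ω.2)) e he
    refine Eq.trans h1 ?_
    rw [← ms_card, ← ent_prod_unif (isPMF_distOf (isPMF_pi hPS n) (f n))]
    unfold entRV
    congr 1
    funext c
    exact distOf_pair (fun s : Fin n → 𝒮 => ∏ i, PS (s i)) (f n) (fun _ => Equiv.refl _) _ c.1 c.2
  unfold MI
  rw [hX, hY, hXY]
  push_cast
  rw [Real.logb_mul (by positivity) (by positivity)]
  ring

open scoped Classical in
lemma ms_Pe (n : ℕ) :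
    Pe (mkScheme k L f g) PS n
      = ∑ s ∈ Finset.univ.filter (fun s => g n (f n s) ≠ s), ∏ i, PS (s i) := by
  have hdec : ∀ (s : Fin n → 𝒮) (u : (mkScheme k L f g).U n),
      (mkScheme k L f g).dec n ((mkScheme k L f g).enc n s u) = some (g n (f n s)) := by
    intro s u
    simp [mkScheme]
  unfold Pe
  simp only [hdec]
  rw [Finset.sum_filter, Finset.sum_filter, Fintype.sum_prod_type]
  refine Finset.sum_congr rfl fun s _ => ?_
  have hK : (0 : ℝ) < Fintype.card ((mkScheme k L f g).U n) := by
    exact_mod_cast Fintype.card_pos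
  simp only [ne_eq, Option.some.injEq, jp, Finset.sum_const, Finset.card_univ, nsmul_eq_mul]
  split_ifs
  · simp
  · field_simp

lemma ms_acc (n : ℕ) (F : (ZMod (k n + 1) × Fin (L n + 1)) → (ZMod (k n + 1) × Fin (L n + 1)) → ℝ) :
    ∑ xy ∈ AccRegion (mkScheme k L f g) n, F xy.1 xy.2
      = ∑ x : ZMod (k n + 1) × Fin (L n + 1), ∑ y : ZMod (k n + 1) × Fin (L n + 1),
        if x.2 = y.2 then F x y else 0 := by
  classical
  unfold AccRegion
  rw [Finset.sum_filter]
  refine Eq.trans (Fintype.sum_prod_type _) ?_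
  refine Finset.sum_congr rfl fun x _ => Finset.sum_congr rfl fun y _ => ?_
  by_cases h : x.2 = y.2
  · rw [if_pos h, if_pos]
    simp [mkScheme, h]
  · rw [if_neg h, if_neg]
    simp [mkScheme, h]

lemma ms_PimpX (hPS : IsPMF PS) (n : ℕ) :
    PimpX (mkScheme k L f g) PS n = 1 / ((L n + 1 : ℕ) : ℝ) := by
  classical
  have hne : Nonempty {Q : (mkScheme k L f g).X n → ℝ // IsPMF Q} :=
    ⟨⟨_, isPMF_delta ((0, 0) : ZMod (k n + 1) × Fin (L n + 1))⟩⟩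
  unfold PimpX
  have : ∀ Q : {Q : (mkScheme k L f g).X n → ℝ // IsPMF Q},
      ∑ xy ∈ AccRegion (mkScheme k L f g) n,
        Q.1 xy.1 * distOf (jp (mkScheme k L f g) PS n) (Yn (mkScheme k L f g) n) xy.2
      = 1 / ((L n + 1 : ℕ) : ℝ) := by
    intro Q
    have h1 := ms_acc k L f g n (fun x y => Q.1 x *
      distOf (jp (mkScheme k L f g) PS n) (Yn (mkScheme k L f g) n) y)
    refine h1.trans ?_
    have h2 : ∀ x : ZMod (k n + 1) × Fin (L n + 1),
        (∑ y : ZMod (k n + 1) × Fin (L n + 1), if x.2 = y.2 then Q.1 x *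
          distOf (jp (mkScheme k L f g) PS n) (Yn (mkScheme k L f g) n) y else 0)
        = Q.1 x * (1 / ((L n + 1 : ℕ) : ℝ)) := by
      intro x
      rw [← acc_sum (k n) (L n) x.2, Finset.mul_sum]
      refine Finset.sum_congr rfl fun y _ => ?_
      rw [ms_distY k L f g PS hPS n y, mul_ite, mul_zero]
    refine (Finset.sum_congr rfl fun x _ => h2 x).trans ?_
    have h3 : ∑ x : ZMod (k n + 1) × Fin (L n + 1), Q.1 x = 1 := Q.2.2
    exact (Finset.sum_mul _ _ _).symm.trans ((congrArg (· * (1 / ((L n + 1 : ℕ) : ℝ))) h3).trans (one_mul _))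
  simp only [this]
  exact ciSup_const

lemma ms_PimpY (hPS : IsPMF PS) (n : ℕ) :
    PimpY (mkScheme k L f g) PS n = 1 / ((L n + 1 : ℕ) : ℝ) := by
  classical
  have hne : Nonempty {Q : (mkScheme k L f g).Y n → ℝ // IsPMF Q} :=
    ⟨⟨_, isPMF_delta ((0, 0) : ZMod (k n + 1) × Fin (L n + 1))⟩⟩
  unfold PimpY
  have : ∀ Q : {Q : (mkScheme k L f g).Y n → ℝ // IsPMF Q},
      ∑ xy ∈ AccRegion (mkScheme k L f g) n,
        distOf (jp (mkScheme k L f g) PS n) (Xn (mkScheme k L f g) n) xy.1 * Q.1 xy.2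
      = 1 / ((L n + 1 : ℕ) : ℝ) := by
    intro Q
    have h1 := ms_acc k L f g n (fun x y =>
      distOf (jp (mkScheme k L f g) PS n) (Xn (mkScheme k L f g) n) x * Q.1 y)
    refine h1.trans ?_
    rw [Finset.sum_comm]
    have h2 : ∀ y : ZMod (k n + 1) × Fin (L n + 1),
        (∑ x : ZMod (k n + 1) × Fin (L n + 1), if x.2 = y.2 then
          distOf (jp (mkScheme k L f g) PS n) (Xn (mkScheme k L f g) n) x * Q.1 y else 0)
        = (1 / ((L n + 1 : ℕ) : ℝ)) * Q.1 y := by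
      intro y
      rw [← acc_sum (k n) (L n) y.2, Finset.sum_mul]
      refine Finset.sum_congr rfl fun x _ => ?_
      rw [ms_distX k L f g PS hPS n x, ite_mul, zero_mul]
      simp only [eq_comm]
    refine (Finset.sum_congr rfl fun x _ => h2 x).trans ?_
    have h3 : ∑ x : ZMod (k n + 1) × Fin (L n + 1), Q.1 x = 1 := Q.2.2
    exact (Finset.mul_sum _ _ _).symm.trans ((congrArg ((1 / ((L n + 1 : ℕ) : ℝ)) * ·) h3).trans (mul_one _))
  simp only [this]
  exact ciSup_const

end scheme

/-- direct part: for every source distribution and every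
`ℓ ≥ 0`, there is a sequence of encoder/decoder pairs asymptotically realizing
a (2,2)-threshold scheme with correlation level `ℓ` whose rates are
asymptotically at most `H(S)+ℓ`, whose impersonation-success exponents are
asymptotically at least `ℓ`, and which satisfies perfect secrecy
`I(Sⁿ;Xₙ) = I(Sⁿ;Yₙ) = 0` for all `n ≥ 1`. -/
theorem statement3 {𝒮 : Type} [Fintype 𝒮] (PS : 𝒮 → ℝ) (hPS : IsPMF PS)
    (ℓ : ℝ) (hℓ : 0 ≤ ℓ) :
    ∃ C : Scheme22 𝒮, Realizes C PS ℓ ∧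
      limsup (fun n => Real.logb 2 (Fintype.card (C.X n)) / (n : ℝ)) atTop
        ≤ ent PS + ℓ ∧
      limsup (fun n => Real.logb 2 (Fintype.card (C.Y n)) / (n : ℝ)) atTop
        ≤ ent PS + ℓ ∧
      limsup (fun n => Real.logb 2 (Fintype.card (C.U n)) / (n : ℝ)) atTop
        ≤ ent PS + ℓ ∧
      ℓ ≤ liminf (fun n => min (-Real.logb 2 (PimpX C PS n) / (n : ℝ))
            (-Real.logb 2 (PimpY C PS n) / (n : ℝ))) atTop ∧
      ∀ n, 1 ≤ n →
        MI (jp C PS n) (Sn C n) (Xn C n) = 0 ∧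
        MI (jp C PS n) (Sn C n) (Yn C n) = 0 := by
  obtain ⟨k, f, g, hPe, hk, hf⟩ := source_coding hPS
  obtain ⟨L, hL⟩ := key_rate hℓ
  have hcard : Tendsto (fun n : ℕ =>
      Real.logb 2 (Fintype.card (ZMod (k n + 1) × Fin (L n + 1)) : ℝ) / (n : ℝ))
      atTop (nhds (ent PS + ℓ)) := by
    refine (hk.add hL).congr fun n => ?_
    rw [ms_card]
    push_cast
    rw [Real.logb_mul (by positivity) (by positivity), add_div]
  refine ⟨mkScheme k L f g, ⟨?_, ?_, ?_, ?_⟩, hcard.limsup_eq.le, hcard.limsup_eq.le,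
    hcard.limsup_eq.le, ?_, fun n _ => ⟨ms_MI_SX k L f g PS hPS n, ms_MI_SY k L f g PS hPS n⟩⟩
  · refine hPe.congr fun n => ?_
    rw [ms_Pe]
  · simp only [ms_MI_SX k L f g PS hPS, zero_div]
    exact tendsto_const_nhds
  · simp only [ms_MI_SY k L f g PS hPS, zero_div]
    exact tendsto_const_nhds
  · simp only [ms_MI_XY k L f g PS hPS]
    have h := (hk.add hL).sub hf
    rw [add_sub_cancel_left] at h
    refine h.congr fun n => ?_
    ring
  · simp only [ms_PimpX k L f g PS hPS, ms_PimpY k L f g PS hPS, min_self, one_div,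
      Real.logb_inv, neg_neg]
    exact hL.liminf_eq.ge
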